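/- Let f : Q0 = [0,1]^n → ℝ be integrable with ∫_{Q0} f = 0 and finite dyadic BMO seminorm ‖f‖_{*,D}, and let f_d be its nonincreasing rearrangement. Then for every t ∈ (0,1], f_d(t) ≤ 2^{n−1} e ‖f‖_{*,D} · ln(e/t); i.e. the bound f_d(t) ≤ (‖f‖_{*,D}/b) ln(B/t) holds with b = 1/(2^{n−1}e) and B = e. -/

import Mathlib

open MeasureTheory Set Real

noncomputable section

/-- The unit cube `Q₀ = [0,1]ⁿ` in `ℝⁿ`. -/
def Q0 (n : ℕ) : Set (Fin n → ℝ) := Set.Icc 0 1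

/-- The integral average `f_Q = (1/|Q|) ∫_Q f` of `f` over `Q`. -/
def avgOn {n : ℕ} (f : (Fin n → ℝ) → ℝ) (Q : Set (Fin n → ℝ)) : ℝ :=
  (volume Q).toReal⁻¹ * ∫ x in Q, f x

/-- The mean oscillation `Ω(f,Q) = (1/|Q|) ∫_Q |f - f_Q|` of `f` over `Q`. -/
def oscOn {n : ℕ} (f : (Fin n → ℝ) → ℝ) (Q : Set (Fin n → ℝ)) : ℝ :=
  (volume Q).toReal⁻¹ * ∫ x in Q, |f x - avgOn f Q|

/-- `Q` is a dyadic subcube of `[0,1]ⁿ` of side length `2⁻ᵏ`,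
i.e. `Q = ∏ᵢ [mᵢ 2⁻ᵏ, (mᵢ+1) 2⁻ᵏ]` with `0 ≤ mᵢ < 2ᵏ`. -/
def IsDyadicSide (n k : ℕ) (Q : Set (Fin n → ℝ)) : Prop :=
  ∃ m : Fin n → ℕ, (∀ i, m i < 2 ^ k) ∧
    Q = Set.Icc (fun i => (m i : ℝ) / 2 ^ k) (fun i => ((m i : ℝ) + 1) / 2 ^ k)

/-- `Q` belongs to the family `𝒟` of dyadic subcubes of `[0,1]ⁿ`. -/
def IsDyadic (n : ℕ) (Q : Set (Fin n → ℝ)) : Prop := ∃ k, IsDyadicSide n k Q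

/-- One-dimensional integral average `g_J` over a set `J ⊆ ℝ`. -/
def avgI (g : ℝ → ℝ) (J : Set ℝ) : ℝ := (volume J).toReal⁻¹ * ∫ u in J, g u

/-- One-dimensional mean oscillation `Ω(g,J)` over a set `J ⊆ ℝ`. -/
def oscI (g : ℝ → ℝ) (J : Set ℝ) : ℝ :=
  (volume J).toReal⁻¹ * ∫ u in J, |g u - avgI g J|

/-- `g : (0,1] → ℝ` is the nonincreasing, left-continuous rearrangement of
`f : [0,1]ⁿ → ℝ`, i.e. it is nonincreasing, left continuous and equimeasurable with `f`. -/
def IsRearrangement {n : ℕ} (f : (Fin n → ℝ) → ℝ) (g : ℝ → ℝ) : Prop :=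
  AntitoneOn g (Set.Ioc 0 1) ∧
  (∀ t ∈ Set.Ioc (0:ℝ) 1, ContinuousWithinAt g (Set.Iio t) t) ∧
  ∀ lam : ℝ, volume {t ∈ Set.Ioc (0:ℝ) 1 | lam < g t} = volume {x ∈ Q0 n | lam < f x}

/-- The Hardy average `F(t) = (1/t) ∫_0^t g(u) du`. -/
def hardyAvg (g : ℝ → ℝ) (t : ℝ) : ℝ := t⁻¹ * ∫ u in Set.Ioc (0:ℝ) t, g u

/-- The Gurov–Reshetnyak modulus
`v(f;σ) = sup { Ω(f,Q)/f_Q : Q ∈ 𝒟, ℓ(Q) ≤ σ, f_Q > 0 }` (equal to `0` if no such `Q` exists,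
by the convention `sSup ∅ = 0` in `ℝ`). -/
def vGR {n : ℕ} (f : (Fin n → ℝ) → ℝ) (σ : ℝ) : ℝ :=
  sSup {r : ℝ | ∃ k Q, IsDyadicSide n k Q ∧ ((2:ℝ) ^ k)⁻¹ ≤ σ ∧
    0 < avgOn f Q ∧ r = oscOn f Q / avgOn f Q}

/-- `f` satisfies the dyadic Gurov–Reshetnyak condition `f ∈ GR_𝒟(Q₀,ε)`:
`f : Q₀ → [0,∞)` is integrable and `Ω(f,Q) ≤ ε f_Q` for every dyadic cube `Q`. -/
def GRcond {n : ℕ} (f : (Fin n → ℝ) → ℝ) (ε : ℝ) : Prop :=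
  IntegrableOn f (Q0 n) ∧ (∀ x ∈ Q0 n, 0 ≤ f x) ∧
    ∀ Q, IsDyadic n Q → oscOn f Q ≤ ε * avgOn f Q

def dcube (n k : ℕ) (m : Fin n → ℕ) : Set (Fin n → ℝ) :=
  Set.Icc (fun i => (m i : ℝ) / 2 ^ k) (fun i => ((m i : ℝ) + 1) / 2 ^ k)

def idx {n : ℕ} (k : ℕ) (x : Fin n → ℝ) : Fin n → ℕ := fun i => ⌊x i * 2 ^ k⌋₊

def hcube (n : ℕ) : Set (Fin n → ℝ) := Set.pi univ (fun _ => Ico (0:ℝ) 1)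

def cell (n k : ℕ) (m : Fin n → ℕ) : Set (Fin n → ℝ) := {x | x ∈ hcube n ∧ idx k x = m}

lemma idx_lt {n k : ℕ} {x : Fin n → ℝ} (hx : x ∈ hcube n) (i : Fin n) : idx k x i < 2 ^ k := by
  have h := hx i (mem_univ i)
  unfold idx
  rw [Nat.floor_lt (mul_nonneg h.1 (by positivity))]
  push_cast
  have := h.2
  have h2 : (0:ℝ) < 2 ^ k := by positivity
  nlinarith

lemma idx_succ {n k : ℕ} (x : Fin n → ℝ) (i : Fin n) : idx k x i = idx (k+1) x i / 2 := by
  unfold idx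
  rw [← Nat.floor_div_ofNat]
  congr 1
  rw [pow_succ]
  ring

lemma idx_mono {n k j : ℕ} (hj : j ≤ k) {x y : Fin n → ℝ} (h : idx k x = idx k y) :
    idx j x = idx j y := by
  induction k, hj using Nat.le_induction with
  | base => exact h
  | succ k hk ih =>
    apply ih
    funext i
    rw [idx_succ, idx_succ y, h]

lemma measurable_idx {n k : ℕ} : Measurable (idx (n := n) k) := by
  unfold idx
  refine measurable_pi_lambda _ fun i => ?_
  exact Nat.measurable_floor.comp ((measurable_pi_apply i).mul_const _)

lemma measurableSet_hcube (n : ℕ) : MeasurableSet (hcube n) :=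
  MeasurableSet.univ_pi fun _ => measurableSet_Ico

lemma measurableSet_idx {n : ℕ} (k : ℕ) (p : (Fin n → ℕ) → Prop) :
    MeasurableSet {x : Fin n → ℝ | p (idx k x)} :=
  measurable_idx (MeasurableSet.of_discrete (s := {m | p m}))

lemma cell_eq {n k : ℕ} {m : Fin n → ℕ} (hm : ∀ i, m i < 2 ^ k) :
    cell n k m = Set.pi univ (fun i => Ico ((m i : ℝ) / 2 ^ k) (((m i : ℝ) + 1) / 2 ^ k)) := by
  have h2 : (0:ℝ) < 2 ^ k := by positivity
  ext x
  simp only [cell, hcube, mem_ofPred_eq, Set.mem_pi, mem_univ, forall_true_left, mem_Ico]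
  constructor
  · rintro ⟨h, rfl⟩ i
    have h0 := mul_nonneg (h i).1 h2.le
    rw [div_le_iff₀ h2, lt_div_iff₀ h2]
    exact ⟨Nat.floor_le h0, Nat.lt_floor_add_one _⟩
  · intro h
    have h' : ∀ i, (m i : ℝ) ≤ x i * 2 ^ k ∧ x i * 2 ^ k < m i + 1 := fun i => by
      have := h i
      rwa [div_le_iff₀ h2, lt_div_iff₀ h2] at this
    refine ⟨fun i => ⟨le_trans (by positivity) (h i).1, ?_⟩, ?_⟩
    · refine lt_of_lt_of_le (h i).2 ?_
      rw [div_le_one h2]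
      exact_mod_cast hm i
    · funext i
      exact (Nat.floor_eq_iff ((Nat.cast_nonneg _).trans (h' i).1)).2 (h' i)

lemma cell_ae {n k : ℕ} {m : Fin n → ℕ} (hm : ∀ i, m i < 2 ^ k) :
    cell n k m =ᵐ[volume] dcube n k m := by
  rw [cell_eq hm]
  exact Measure.univ_pi_Ico_ae_eq_Icc

lemma vol_cube {n k : ℕ} (m : Fin n → ℕ) :
    (volume (dcube n k m)).toReal = ((2:ℝ) ^ k)⁻¹ ^ n := by
  unfold dcube
  rw [Real.volume_Icc_pi_toReal]
  · simp [add_div]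
  · intro i
    simp only
    gcongr
    linarith

lemma vol_cell {n k : ℕ} {m : Fin n → ℕ} (hm : ∀ i, m i < 2 ^ k) :
    (volume (cell n k m)).toReal = ((2:ℝ) ^ k)⁻¹ ^ n := by
  rw [measure_congr (cell_ae hm), vol_cube]

lemma dcube_subset {n k : ℕ} {m : Fin n → ℕ} (hm : ∀ i, m i < 2 ^ k) :
    dcube n k m ⊆ Q0 n := by
  apply Icc_subset_Icc
  · intro i; simp only [Pi.zero_apply]; positivity
  · intro i
    simp only [Pi.one_apply]
    rw [div_le_one (by positivity)]
    exact_mod_cast hm i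

lemma hcube_ae (n : ℕ) : hcube n =ᵐ[volume] Q0 n := Measure.univ_pi_Ico_ae_eq_Icc

lemma hcube_subset (n : ℕ) : hcube n ⊆ Q0 n := fun x hx =>
  ⟨fun i => (hx i trivial).1, fun i => (hx i trivial).2.le⟩

lemma vol_Q0 (n : ℕ) : volume (Q0 n) = 1 := by
  unfold Q0
  rw [Real.volume_Icc_pi]
  simp

lemma half_osc {n : ℕ} {f : (Fin n → ℝ) → ℝ} {Q : Set (Fin n → ℝ)} (hf : IntegrableOn f Q)
    {α M : ℝ} (hQ : 0 < (volume Q).toReal) (ha : avgOn f Q ≤ α) (hM : oscOn f Q ≤ M) :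
    ∫ x in Q, max (f x - α) 0 ≤ M / 2 * (volume Q).toReal := by
  have hfin : volume Q ≠ ⊤ := fun h => by simp [h] at hQ
  have hc : ∀ c : ℝ, IntegrableOn (fun _ => c) Q := fun c => integrableOn_const hfin
  have hfa : IntegrableOn (fun x => f x - avgOn f Q) Q := hf.sub (hc _)
  have h1 : ∫ x in Q, (f x - avgOn f Q) = 0 := by
    rw [integral_sub hf (hc _), setIntegral_const, avgOn, smul_eq_mul, Measure.real,
      mul_inv_cancel_left₀ hQ.ne', sub_self]
  have h2 : ∫ x in Q, |f x - avgOn f Q| ≤ M * (volume Q).toReal := by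
    unfold oscOn at hM
    rwa [inv_mul_le_iff₀ hQ, mul_comm] at hM
  calc ∫ x in Q, max (f x - α) 0
      ≤ ∫ x in Q, (1/2 * |f x - avgOn f Q| + 1/2 * (f x - avgOn f Q)) := by
        apply integral_mono
        · exact (hf.sub (hc α)).pos_part
        · exact (hfa.abs.const_mul _).add (hfa.const_mul _)
        · intro x
          simp only
          rcases abs_cases (f x - avgOn f Q) with h | h <;> apply max_le <;> linarith
    _ = 1/2 * ∫ x in Q, |f x - avgOn f Q| := by
        rw [integral_add (hfa.abs.const_mul _) (hfa.const_mul _), integral_const_mul,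
          integral_const_mul, h1]
        ring
    _ ≤ _ := by linarith

lemma ae_le_of_avg {n : ℕ} {f : (Fin n → ℝ) → ℝ} (hf : IntegrableOn f (Q0 n)) (α : ℝ) :
    ∀ᵐ x, x ∈ hcube n → (∀ k, avgOn f (dcube n k (idx k x)) ≤ α) → f x ≤ α := by
  have hQm : MeasurableSet (Q0 n) := measurableSet_Icc
  have hF : Integrable ((Q0 n).indicator f) := (integrable_indicator_iff hQm).2 hf
  filter_upwards [IsUnifLocDoublingMeasure.ae_tendsto_average volume hF.locallyIntegrable 1]
    with x hx hxX hav
  have hfx : (Q0 n).indicator f x = f x := indicator_of_mem (hcube_subset n hxX) f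
  have hball : ∀ k : ℕ, Metric.closedBall (fun i => ((idx k x i : ℝ) + 1/2) / 2 ^ k)
      ((1/2 : ℝ) * (1/2) ^ k) = dcube n k (idx k x) := by
    intro k
    rw [closedBall_pi _ (by positivity), dcube, ← pi_univ_Icc]
    congr 1
    funext i
    rw [Real.closedBall_eq_Icc]
    congr 1 <;> (rw [one_div_pow]; field_simp; ring)
  have hmem : ∀ k : ℕ, x ∈ dcube n k (idx k x) := by
    intro k
    have : x ∈ cell n k (idx k x) := ⟨hxX, rfl⟩
    rw [cell_eq (idx_lt hxX)] at this
    exact ⟨fun i => (this i trivial).1, fun i => (this i trivial).2.le⟩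
  have ht := hx (l := Filter.atTop) (fun k : ℕ => (fun i => ((idx k x i : ℝ) + 1/2) / 2 ^ k))
    (fun k => (1/2 : ℝ) * (1/2) ^ k) ?_ ?_
  · rw [hfx] at ht
    refine le_of_tendsto' ht fun k => ?_
    rw [hball, setAverage_eq]
    refine le_trans (le_of_eq ?_) (hav k)
    rw [avgOn, smul_eq_mul, Measure.real]
    congr 1
    refine setIntegral_congr_fun measurableSet_Icc fun y hy => ?_
    exact indicator_of_mem (dcube_subset (idx_lt hxX) hy) f
  · rw [tendsto_nhdsWithin_iff]
    constructor
    · have := (tendsto_pow_atTop_nhds_zero_of_lt_one (r := (1/2:ℝ)) (by norm_num)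
        (by norm_num)).const_mul (1/2)
      simpa using this
    · exact Filter.Eventually.of_forall fun k => by simp only [mem_Ioi]; positivity
  · refine Filter.Eventually.of_forall fun k => ?_
    rw [one_mul, hball]
    exact hmem k

lemma iUnion_integral_nonneg {n : ℕ} {ι : Type*} [Countable ι] {s : ι → Set (Fin n → ℝ)}
    {h : (Fin n → ℝ) → ℝ} (hm : ∀ i, MeasurableSet (s i)) (hd : Pairwise (Function.onFun Disjoint s))
    (hi : IntegrableOn h (⋃ i, s i)) (h0 : ∀ i, 0 ≤ ∫ x in s i, h x) :
    0 ≤ ∫ x in ⋃ i, s i, h x :=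
  (hasSum_integral_iUnion hm hd hi).nonneg h0

lemma cz {n : ℕ} (hn : 1 ≤ n) {f : (Fin n → ℝ) → ℝ} (hf : IntegrableOn f (Q0 n))
    (hzero : ∫ x in Q0 n, f x = 0) {M : ℝ} (hM0 : 0 ≤ M)
    (hM : ∀ Q, IsDyadic n Q → oscOn f Q ≤ M) {α : ℝ} (hα : 0 ≤ α) :
    ∃ E ⊆ Q0 n, MeasurableSet E ∧ 0 ≤ ∫ x in E, (f x - α) ∧
      ∫ x in Q0 n, max (f x - α) 0 ≤ 2 ^ (n - 1) * M * (volume E).toReal := by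
  classical
  obtain ⟨A, hA⟩ : ∃ A : ℕ → (Fin n → ℕ) → ℝ, ∀ k m, A k m = avgOn f (dcube n k m) :=
    ⟨_, fun _ _ => rfl⟩
  obtain ⟨G, hG⟩ : ∃ G : ℕ → (Fin n → ℕ) → Prop, ∀ k m, G k m ↔
      ∃ y ∈ hcube n, idx k y = m ∧ α < A (k+1) (idx (k+1) y) := ⟨_, fun _ _ => Iff.rfl⟩
  obtain ⟨St, hSt⟩ : ∃ St : ℕ → (Fin n → ℝ) → Prop, ∀ k x, St k x ↔
      (G k (idx k x) ∧ ∀ j < k, ¬ G j (idx j x)) := ⟨_, fun _ _ => Iff.rfl⟩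
  have St_congr : ∀ {k x y}, idx k x = idx k y → St k x → St k y := by
    intro k x y h hx
    rw [hSt] at hx ⊢
    refine ⟨h ▸ hx.1, fun j hj => ?_⟩
    rw [← idx_mono hj.le h]
    exact hx.2 j hj
  have St_uniq : ∀ {k l x}, St k x → St l x → k = l := by
    intro k l x h1 h2
    rw [hSt] at h1 h2
    rcases lt_trichotomy k l with h | h | h
    · exact absurd h1.1 (h2.2 k h)
    · exact h
    · exact absurd h2.1 (h1.2 l h)
  have St_meas : ∀ k, MeasurableSet {x | St k x} := by
    intro k
    have : {x | St k x} = {x | G k (idx k x)} ∩ ⋂ j ∈ Iio k, {x | ¬ G j (idx j x)} := by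
      ext x
      simp [hSt]
    rw [this]
    refine (measurableSet_idx k _).inter ?_
    exact MeasurableSet.biInter (to_countable _) fun j _ => measurableSet_idx j (fun m => ¬ G j m)
  have St_avg : ∀ {k x}, x ∈ hcube n → (∀ j < k, ¬ G j (idx j x)) → A k (idx k x) ≤ α := by
    intro k x hx h
    rcases k with _ | k
    · have hq : dcube n 0 (idx 0 x) = Q0 n := by
        have h0 : ∀ i, idx 0 x i = 0 := fun i => by
          have := idx_lt (k := 0) hx i
          simpa using this
        unfold dcube Q0
        simp only [h0]
        congr 1 <;> (funext i; simp)
      rw [hA, hq, avgOn, hzero, mul_zero]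
      exact hα
    · have := h k (Nat.lt_succ_self k)
      rw [hG] at this
      push Not at this
      exact this x hx rfl
  set s : ℕ × (Fin n → ℕ) → Set (Fin n → ℝ) :=
    fun p => {x | x ∈ hcube n ∧ idx p.1 x = p.2 ∧ St p.1 x} with hs
  set t : ℕ × (Fin n → ℕ) → Set (Fin n → ℝ) :=
    fun p => {x | x ∈ hcube n ∧ idx (p.1+1) x = p.2 ∧ St p.1 x ∧ α < A (p.1+1) (idx (p.1+1) x)}
    with ht
  have hsm : ∀ p, MeasurableSet (s p) := fun p =>
    (measurableSet_hcube n).inter ((measurableSet_idx p.1 (fun m => m = p.2)).inter (St_meas p.1))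
  have htm : ∀ p, MeasurableSet (t p) := fun p =>
    (measurableSet_hcube n).inter ((measurableSet_idx (p.1+1) (fun m => m = p.2)).inter
      ((St_meas p.1).inter (measurableSet_idx (p.1+1) (fun m => α < A (p.1+1) m))))
  have hsd : Pairwise (Function.onFun Disjoint s) := by
    intro p q hpq
    refine Set.disjoint_left.2 fun x hx hy => hpq ?_
    have h1 : p.1 = q.1 := St_uniq hx.2.2 hy.2.2
    refine Prod.ext h1 ?_
    rw [← hx.2.1, ← hy.2.1, h1]
  have htd : Pairwise (Function.onFun Disjoint t) := by
    intro p q hpq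
    refine Set.disjoint_left.2 fun x hx hy => hpq ?_
    have h1 : p.1 = q.1 := St_uniq hx.2.2.1 hy.2.2.1
    refine Prod.ext h1 ?_
    rw [← hx.2.1, ← hy.2.1, h1]
  set E := ⋃ p, t p with hE
  set U := ⋃ p, s p with hU
  have hEm : MeasurableSet E := MeasurableSet.iUnion htm
  have hUm : MeasurableSet U := MeasurableSet.iUnion hsm
  have hUX : U ⊆ hcube n := iUnion_subset fun p x hx => hx.1
  have hEU : E ⊆ U := iUnion_subset fun p x hx => mem_iUnion.2 ⟨(p.1, idx p.1 x), hx.1, rfl, hx.2.2.1⟩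
  have hUQ : U ⊆ Q0 n := hUX.trans (hcube_subset n)
  have hEQ : E ⊆ Q0 n := hEU.trans hUQ
  have hfin : volume (Q0 n) ≠ ⊤ := by rw [vol_Q0]; simp
  have hc : ∀ c : ℝ, IntegrableOn (fun _ => c) (Q0 n) := fun c => integrableOn_const hfin
  have hfα : IntegrableOn (fun x => f x - α) (Q0 n) := hf.sub (hc α)
  have hg : IntegrableOn (fun x => max (f x - α) 0) (Q0 n) := hfα.pos_part
  have hpos : ∀ k m, 0 < (volume (dcube n k m)).toReal := fun k m => by
    rw [vol_cube]; positivity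
  refine ⟨E, hEQ, hEm, ?_, ?_⟩
  · refine iUnion_integral_nonneg htm htd (hfα.mono_set hEQ) ?_
    rintro ⟨k, m⟩
    rcases (t (k, m)).eq_empty_or_nonempty with he | ⟨x, hx⟩
    · rw [he]; simp
    · obtain ⟨hxX, hxm, hxS, hxA⟩ := hx
      simp only at hxm hxS hxA
      rw [hxm] at hxA
      have hm : ∀ i, m i < 2 ^ (k+1) := fun i => by rw [← hxm]; exact idx_lt hxX i
      have h1 : t (k, m) = cell n (k+1) m := by
        ext y
        constructor
        · intro hy; exact ⟨hy.1, hy.2.1⟩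
        · intro hy
          refine ⟨hy.1, hy.2, St_congr (idx_mono (Nat.le_succ k) (hxm.trans hy.2.symm)) hxS, ?_⟩
          simp only [hy.2]
          exact hxA
      have hsub := dcube_subset hm
      rw [h1, setIntegral_congr_set (cell_ae hm), integral_sub (hf.mono_set hsub) ((hc α).mono_set hsub),
        setIntegral_const, smul_eq_mul, Measure.real]
      rw [hA, avgOn, lt_inv_mul_iff₀ (hpos _ _)] at hxA
      linarith
  · set c : ℝ := 2 ^ (n - 1) * M with hcdef
    have hc2 : c * 2 = 2 ^ n * M := by
      obtain ⟨k, rfl⟩ : ∃ k, n = k + 1 := ⟨n - 1, by omega⟩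
      simp only [hcdef, Nat.add_sub_cancel]
      ring
    have hEi : ∀ S : Set (Fin n → ℝ), MeasurableSet S → 
        ∫ x in S, E.indicator (fun _ => c) x = c * (volume (S ∩ E)).toReal := by
      intro S hS
      rw [setIntegral_indicator hEm, setIntegral_const, smul_eq_mul, mul_comm]; rfl
    have hEint : IntegrableOn (E.indicator (fun _ => c)) (Q0 n) := (hc c).indicator hEm
    have key : 0 ≤ ∫ x in U, (E.indicator (fun _ => c) x - max (f x - α) 0) := by
      refine iUnion_integral_nonneg hsm hsd ((hEint.sub hg).mono_set hUQ) ?_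
      rintro ⟨k, m⟩
      rcases (s (k, m)).eq_empty_or_nonempty with he | ⟨x, hx⟩
      · rw [he]; simp
      · obtain ⟨hxX, hxm, hxS⟩ := hx
        simp only at hxm hxS
        have hm : ∀ i, m i < 2 ^ k := fun i => by rw [← hxm]; exact idx_lt hxX i
        have h1 : s (k, m) = cell n k m := by
          ext y
          constructor
          · intro hy; exact ⟨hy.1, hy.2.1⟩
          · intro hy
            exact ⟨hy.1, hy.2, St_congr (hxm.trans hy.2.symm) hxS⟩
        have hsub := dcube_subset hm
        have hsQ : s (k, m) ⊆ Q0 n := (subset_iUnion s (k, m)).trans hUQ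
        rw [integral_sub (hEint.mono_set hsQ) (hg.mono_set hsQ), hEi _ (hsm _)]
        have hS' := (hSt k x).1 hxS
        have hav : avgOn f (dcube n k m) ≤ α := by
          rw [← hA, ← hxm]; exact St_avg hxX hS'.2
        have hup : ∫ x in s (k, m), max (f x - α) 0 ≤ M / 2 * ((2:ℝ) ^ k)⁻¹ ^ n := by
          rw [h1, setIntegral_congr_set (cell_ae hm), ← vol_cube m]
          exact half_osc (hf.mono_set hsub) (hpos _ _) hav (hM _ ⟨k, m, hm, rfl⟩)
        obtain ⟨y, hyX, hyk, hyA⟩ := (hG _ _).1 hS'.1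
        have hch : cell n (k+1) (idx (k+1) y) ⊆ s (k, m) ∩ E := by
          rintro z ⟨hzX, hz⟩
          have hzk : idx k z = idx k x := (idx_mono (Nat.le_succ k) hz).trans hyk
          refine ⟨⟨hzX, hzk.trans hxm, St_congr hzk.symm hxS⟩, ?_⟩
          refine mem_iUnion.2 ⟨(k, idx (k+1) y), hzX, hz, St_congr hzk.symm hxS, ?_⟩
          simp only [hz]
          exact hyA
        have hvol : ((2:ℝ) ^ (k+1))⁻¹ ^ n ≤ (volume (s (k, m) ∩ E)).toReal := by
          rw [← vol_cell (idx_lt hyX)]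
          apply ENNReal.toReal_mono _ (measure_mono hch)
          exact measure_ne_top_of_subset (inter_subset_left.trans hsQ) hfin
        have hcn : 0 ≤ c := by positivity
        have h3 : M / 2 * ((2:ℝ) ^ k)⁻¹ ^ n = c * ((2:ℝ) ^ (k+1))⁻¹ ^ n := by
          have : M = c * 2 / 2 ^ n := by rw [hc2]; field_simp
          rw [this, pow_succ, mul_inv, mul_pow, inv_pow 2 n]
          field_simp
        have h4 := mul_le_mul_of_nonneg_left hvol hcn
        linarith
    rw [integral_sub (hEint.mono_set hUQ) (hg.mono_set hUQ), hEi _ hUm,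
      inter_eq_self_of_subset_right hEU] at key
    have hUall : ∫ x in hcube n, max (f x - α) 0 = ∫ x in U, max (f x - α) 0 := by
      refine setIntegral_eq_of_subset_of_ae_sdiff_eq_zero (measurableSet_hcube n).nullMeasurableSet hUX ?_
      filter_upwards [ae_le_of_avg hf α] with x hx hxU
      refine max_eq_right (sub_nonpos.2 (hx hxU.1 ?_))
      have hnG : ∀ j, ¬ G j (idx j x) := by
        by_contra! hcon
        refine hxU.2 (mem_iUnion.2 ⟨(Nat.find hcon, idx (Nat.find hcon) x), hxU.1, rfl, ?_⟩)
        exact (hSt _ _).2 ⟨Nat.find_spec hcon, fun j hj => Nat.find_min hcon hj⟩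
      intro k
      rw [← hA]
      exact St_avg hxU.1 fun j _ => hnG j
    rw [← setIntegral_congr_set (hcube_ae n), hUall]
    linarith

lemma psi_bound {n : ℕ} (hn : 1 ≤ n) {f : (Fin n → ℝ) → ℝ} (hf : IntegrableOn f (Q0 n))
    (hzero : ∫ x in Q0 n, f x = 0) {M : ℝ} (hM0 : 0 ≤ M)
    (hM : ∀ Q, IsDyadic n Q → oscOn f Q ≤ M) (k : ℕ) :
    ∫ x in Q0 n, max (f x - k * (2 ^ (n - 1) * M * Real.exp 1)) 0
      ≤ 2 ^ (n - 1) * M * Real.exp (-k) := by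
  have hfin : volume (Q0 n) ≠ ⊤ := by rw [vol_Q0]; simp
  have hc : ∀ c : ℝ, IntegrableOn (fun _ => c) (Q0 n) := fun c => integrableOn_const hfin
  set c : ℝ := 2 ^ (n - 1) * M with hcdef
  have hcn : 0 ≤ c := by positivity
  induction k with
  | zero =>
    obtain ⟨E, hE, -, -, h⟩ := cz hn hf hzero hM0 hM (α := ((0:ℕ):ℝ) * (c * Real.exp 1)) (by positivity)
    refine h.trans ?_
    have : (volume E).toReal ≤ 1 := by
      have := ENNReal.toReal_mono hfin (measure_mono hE)
      rwa [vol_Q0] at this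
    simpa using mul_le_mul_of_nonneg_left this hcn
  | succ k ih =>
    obtain ⟨E, hE, hEm, h0, h⟩ :=
      cz hn hf hzero hM0 hM (α := ((k+1:ℕ):ℝ) * (c * Real.exp 1)) (by positivity)
    refine h.trans ?_
    have hi : IntegrableOn (fun x => max (f x - k * (c * Real.exp 1)) 0) (Q0 n) :=
      (hf.sub (hc _)).pos_part
    have h1 : ∫ x in E, (f x - k * (c * Real.exp 1)) ≤ c * Real.exp (-k) := by
      refine le_trans ?_ ih
      refine le_trans (integral_mono ((hf.sub (hc _)).mono_set hE) (hi.mono_set hE)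
        fun x => le_max_left _ _) ?_
      exact setIntegral_mono_set hi (Filter.Eventually.of_forall fun x => le_max_right _ _)
        hE.eventuallyLE
    have h2 : ∀ a : ℝ, ∫ x in E, (f x - a) = (∫ x in E, f x) - (volume E).toReal * a := fun a => by
      rw [integral_sub (hf.mono_set hE) ((hc a).mono_set hE), setIntegral_const, smul_eq_mul]; rfl
    rw [h2] at h0 h1
    push_cast at h0 ⊢
    have h3 : (c * (volume E).toReal) * Real.exp 1 ≤ c * Real.exp (-k) := by linarith
    have h4 : Real.exp (-(k:ℝ)) = Real.exp (-((k:ℝ)+1)) * Real.exp 1 := by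
      rw [← Real.exp_add]; ring_nf
    rw [h4, ← mul_assoc] at h3
    exact le_of_mul_le_mul_right h3 (Real.exp_pos 1)

/-- **Theorem 3.1.** If `f ∈ BMO_𝒟([0,1]ⁿ)` with `∫_{Q₀} f = 0` and `Ω(f,Q) ≤ M` for all
dyadic `Q`, then `f_d(t) ≤ 2ⁿ⁻¹ e M · ln(e/t)` for every `t ∈ (0,1]`. -/
theorem rearrangement_log_bound (n : ℕ) (hn : 1 ≤ n)
    (f : (Fin n → ℝ) → ℝ) (hf : IntegrableOn f (Q0 n))
    (hzero : ∫ x in Q0 n, f x = 0)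
    (M : ℝ) (hM : ∀ Q, IsDyadic n Q → oscOn f Q ≤ M)
    (fd : ℝ → ℝ) (hfd : IsRearrangement f fd) :
    ∀ t ∈ Set.Ioc (0:ℝ) 1,
      fd t ≤ 2 ^ (n - 1) * Real.exp 1 * M * Real.log (Real.exp 1 / t) := by
  have hM0 : 0 ≤ M := by
    refine le_trans ?_ (hM (dcube n 0 (fun _ => 0)) ⟨0, fun _ => 0, by simp, rfl⟩)
    unfold oscOn
    exact mul_nonneg (inv_nonneg.2 ENNReal.toReal_nonneg)
      (integral_nonneg fun x => abs_nonneg _)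
  have hfin : volume (Q0 n) ≠ ⊤ := by rw [vol_Q0]; simp
  rintro t ⟨ht0, ht1⟩
  refine le_of_forall_lt_imp_le_of_dense fun lam hlam => ?_
  obtain ⟨hanti, -, heq⟩ := hfd
  have hvol : ENNReal.ofReal t ≤ volume {x ∈ Q0 n | lam < f x} := by
    rw [← heq lam]
    calc ENNReal.ofReal t = volume (Ioc 0 t) := by simp
      _ ≤ volume {t ∈ Set.Ioc (0:ℝ) 1 | lam < fd t} := by
        refine measure_mono fun u hu => ?_
        have hu1 : u ∈ Ioc (0:ℝ) 1 := ⟨hu.1, hu.2.trans ht1⟩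
        exact ⟨hu1, hlam.trans_le (hanti hu1 ⟨ht0, ht1⟩ hu.2)⟩
  have hlog : Real.log (Real.exp 1 / t) = 1 + Real.log (1 / t) := by
    rw [Real.log_div (Real.exp_pos 1).ne' ht0.ne', Real.log_exp, Real.log_div one_ne_zero ht0.ne',
      Real.log_one]
    ring
  set L := Real.log (1 / t) with hL
  have hL0 : 0 ≤ L := Real.log_nonneg (by rw [le_div_iff₀ ht0]; linarith)
  have hte : t = Real.exp (-L) := by
    rw [hL, one_div, Real.log_inv, neg_neg, Real.exp_log ht0]
  set k := ⌊L⌋₊ with hk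
  have hk1 : (k:ℝ) ≤ L := Nat.floor_le hL0
  have hk2 : L < k + 1 := Nat.lt_floor_add_one L
  have hpsi := psi_bound hn hf hzero hM0 hM k
  rw [hlog]
  set c : ℝ := 2 ^ (n - 1) * M with hcdef
  have hcn : 0 ≤ c := by positivity
  have he : Real.exp (-(k:ℝ)) ≤ Real.exp 1 * t := by
    rw [hte, ← Real.exp_add, Real.exp_le_exp]
    linarith
  have hgoal : k * (c * Real.exp 1) + c * Real.exp 1 ≤ 2 ^ (n - 1) * Real.exp 1 * M * (1 + L) := by
    have : 2 ^ (n - 1) * Real.exp 1 * M * (1 + L) = c * Real.exp 1 * (1 + L) := by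
      rw [hcdef]; ring
    rw [this]
    have := mul_le_mul_of_nonneg_left hk1 (mul_nonneg hcn (Real.exp_pos 1).le)
    linarith
  refine le_trans ?_ hgoal
  by_contra! hcon
  set a : ℝ := k * (c * Real.exp 1) with ha
  have hce : 0 ≤ c * Real.exp 1 := mul_nonneg hcn (Real.exp_pos 1).le
  have hi : IntegrableOn (fun x => max (f x - a) 0) (Q0 n) :=
    (hf.sub (integrableOn_const hfin)).pos_part
  have hmk := mul_meas_ge_le_integral_of_nonneg
    (Filter.Eventually.of_forall fun x => le_max_right (f x - a) 0) hi (lam - a)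
  have hfinr : (volume.restrict (Q0 n)) {x | lam - a ≤ max (f x - a) 0} ≠ ⊤ := by
    refine ne_top_of_le_ne_top ?_ (measure_mono (subset_univ _))
    rwa [Measure.restrict_apply_univ]
  have hreal : t ≤ (volume.restrict (Q0 n)).real {x | lam - a ≤ max (f x - a) 0} := by
    rw [Measure.real, ← ENNReal.ofReal_le_iff_le_toReal hfinr]
    refine hvol.trans (le_trans (measure_mono ?_) (Measure.le_restrict_apply _ _))
    rintro x ⟨hx, hfx⟩
    have hle : lam - a ≤ max (f x - a) 0 := le_trans (by linarith) (le_max_left _ _)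
    exact ⟨hle, hx⟩
  have h1 : (lam - a) * t ≤ c * Real.exp 1 * t := by
    calc (lam - a) * t ≤ _ := mul_le_mul_of_nonneg_left hreal (by linarith)
      _ ≤ _ := hmk
      _ ≤ _ := hpsi
      _ ≤ c * (Real.exp 1 * t) := mul_le_mul_of_nonneg_left he hcn
      _ = _ := by ring
  have := le_of_mul_le_mul_right h1 ht0
  linarith
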